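/- arXiv:1812.01934 — 8 statements merged into one kernel-verified Lean document; each statement's English description precedes it below -/
import Mathlib

section
/- Let σ be a relational first-order language and let M be a countable σ-structure. Then M is HH-homogeneous if and only if M has the HH-extension property (HHEP). -/
open FirstOrder Language Structure

universe u v w

/-- `M` is HH-homogeneous: every homomorphism between finite substructures of `M`
extends to an endomorphism of `M`. -/
def IsHHHomogeneous (L : FirstOrder.Language.{u, v}) (M : Type w) [L.Structure M] : Prop :=
  ∀ (A B : L.Substructure M), (A : Set M).Finite → (B : Set M).Finite →
    ∀ f : A →[L] B, ∃ g : M →[L] M, ∀ a : A, g (a : M) = (f a : M)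

/-- `M` has the HH-extension property: for every finite structure `B` in the age of `M`,
every substructure `A` of `B`, and every homomorphism `f : A → M`, there is a
homomorphism `g : B → M` restricting to `f` on `A`. -/
def HasHHEP (L : FirstOrder.Language.{u, v}) (M : Type w) [L.Structure M] : Prop :=
  ∀ (B : Type w) [L.Structure B], Finite B → Nonempty (B ↪[L] M) →
    ∀ (A : L.Substructure B) (f : A →[L] M), ∃ g : B →[L] M, ∀ a : A, g (a : B) = f a

/-!
Homogeneity yields the HHEP by transporting a partial homomorphism along an embedding `B ↪ M`,
extending it to an endomorphism, and restricting the result to `B`. Conversely, a finite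
substructure starts an increasing sequence of finite substructures exhausting the countable
structure `M`; the HHEP extends a homomorphism from each of them to the next, and the union of
these extensions is an endomorphism because every tuple already lies in one of the substructures.
-/

/-- A structure is locally finite if its finitely generated substructures are finite.
It is what lets finite substructures exhaust a countable structure, relational or not. -/
def IsLocallyFinite (L : FirstOrder.Language.{u, v}) (M : Type w) [L.Structure M] : Prop :=
  ∀ S : L.Substructure M, S.FG → Finite S

theorem isLocallyFinite_of_isRelational (L : FirstOrder.Language.{u, v}) [L.IsRelational]
    (M : Type w) [L.Structure M] : IsLocallyFinite L M :=
  fun _ => Substructure.FG.finite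

section

variable {L : FirstOrder.Language.{u, v}} {M : Type w} [L.Structure M]

section Gluing

variable {N : Type*} [L.Structure N]

theorem exists_hom_of_monotone {ι : Type*} [Preorder ι] [IsDirectedOrder ι] [Nonempty ι]
    {S : ι → L.Substructure M} (hS : Monotone S) (hcover : ∀ x, ∃ i, x ∈ S i)
    (f : ∀ i, S i →[L] N)
    (hf : ∀ i j (hij : i ≤ j), (f j).comp (Substructure.inclusion (hS hij)).toHom = f i) :
    ∃ g : M →[L] N, ∀ i, g.domRestrict (S i) = f i := by
  choose idx hidx using hcover
  let g : M → N := fun x => f (idx x) ⟨x, hidx x⟩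
  have g_eq (i) (x : S i) : g x = f i x := by
    obtain ⟨j, hxj, hij⟩ := exists_ge_ge (idx x) i
    exact (DFunLike.congr_fun (hf _ j hxj) ⟨x, hidx x⟩).symm.trans
      (DFunLike.congr_fun (hf i j hij) x)
  have tuple_mem {n} (x : Fin n → M) : ∃ i, ∀ k, x k ∈ S i := by
    obtain ⟨i, hi⟩ := Finite.exists_le fun k => idx (x k)
    exact ⟨i, fun k => hS (hi k) (hidx (x k))⟩
  refine ⟨{ toFun := g, map_fun' := fun F x => ?_, map_rel' := fun R x hR => ?_ },
    fun i => Hom.ext (g_eq i)⟩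
  · obtain ⟨i, hi⟩ := tuple_mem x
    let y : Fin _ → S i := fun k => ⟨x k, hi k⟩
    calc g (funMap F x) = f i (funMap F y) := g_eq i (funMap F y)
      _ = funMap F (f i ∘ y) := (f i).map_fun F y
      _ = funMap F (g ∘ x) := congrArg _ (funext fun k => (g_eq i (y k)).symm)
  · obtain ⟨i, hi⟩ := tuple_mem x
    let y : Fin _ → S i := fun k => ⟨x k, hi k⟩
    have g_comp : g ∘ x = f i ∘ y := funext fun k => g_eq i (y k)
    exact g_comp ▸ (f i).map_rel R y hR

theorem exists_hom_of_forall_extends_succ {S : ℕ → L.Substructure M} (hS : Monotone S)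
    (hcover : ∀ x, ∃ n, x ∈ S n)
    (hext : ∀ n (f : S n →[L] N), ∃ g : S (n + 1) →[L] N,
      g.comp (Substructure.inclusion (hS n.le_succ)).toHom = f)
    (f : S 0 →[L] N) : ∃ g : M →[L] N, g.domRestrict (S 0) = f := by
  choose next hnext using hext
  let F : ∀ n, S n →[L] N := fun n => Nat.rec f next n
  have F_compat (m n) (hmn : m ≤ n) :
      (F n).comp (Substructure.inclusion (hS hmn)).toHom = F m := by
    induction n, hmn using Nat.le_induction with
    | base => rfl
    | succ n hmn ih =>
      rw [← ih, ← hnext n (F n)]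
      rfl
  obtain ⟨g, hg⟩ := exists_hom_of_monotone hS hcover F F_compat
  exact ⟨g, hg 0⟩

end Gluing

theorem IsLocallyFinite.exists_finite_exhaustion [Countable M] (hM : IsLocallyFinite L M)
    (A : L.Substructure M) [Finite A] :
    ∃ S : ℕ → L.Substructure M,
      Monotone S ∧ (∀ n, Finite (S n)) ∧ (∀ x, ∃ n, x ∈ S n) ∧ S 0 = A := by
  obtain ⟨e, he⟩ := exists_injective_nat M
  refine ⟨fun n => A ⊔ Substructure.closure L (e ⁻¹' Set.Iio n), fun m n hmn => ?_, fun n => ?_,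
    fun x => ⟨e x + 1, ?_⟩, ?_⟩
  · exact sup_le_sup_left (Substructure.closure_mono
      (Set.preimage_mono (Set.Iio_subset_Iio hmn))) A
  · exact hM _ (Substructure.FG.of_finite.sup
      (Substructure.fg_closure ((Set.finite_Iio n).preimage he.injOn)))
  · exact le_sup_right (a := A) (Substructure.subset_closure (Nat.lt_succ_self (e x)))
  · simp

theorem IsHHHomogeneous.exists_comp_eq (hM : IsHHHomogeneous L M) {A : Type*} [L.Structure A]
    [Finite A] (e : A ↪[L] M) (f : A →[L] M) : ∃ g : M →[L] M, g.comp e.toHom = f := by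
  obtain ⟨g, hg⟩ := hM e.toHom.range f.range (Set.finite_range e) (Set.finite_range f)
    ((f.codRestrict f.range f.mem_range_self).comp e.equivRange.symm.toHom)
  refine ⟨g, Hom.ext fun a => ?_⟩
  calc g (e a) = f (e.equivRange.symm (e.equivRange a)) := hg (e.equivRange a)
    _ = f a := by rw [e.equivRange.symm_apply_apply]

theorem HasHHEP.exists_comp_eq (hM : HasHHEP L M) {A : Type*} [L.Structure A] {B : Type w}
    [L.Structure B] [Finite B] (i : B ↪[L] M) (e : A ↪[L] B) (f : A →[L] M) :
    ∃ g : B →[L] M, g.comp e.toHom = f := by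
  obtain ⟨g, hg⟩ := hM B ‹_› ⟨i⟩ e.toHom.range (f.comp e.equivRange.symm.toHom)
  refine ⟨g, Hom.ext fun a => ?_⟩
  calc g (e a) = f (e.equivRange.symm (e.equivRange a)) := hg (e.equivRange a)
    _ = f a := by rw [e.equivRange.symm_apply_apply]

theorem IsHHHomogeneous.hasHHEP (hM : IsHHHomogeneous L M) : HasHHEP L M := by
  rintro B _ _ ⟨i⟩ A f
  obtain ⟨g, hg⟩ := hM.exists_comp_eq (i.comp A.subtype) f
  exact ⟨g.comp i.toHom, DFunLike.congr_fun hg⟩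

theorem HasHHEP.exists_domRestrict_eq [Countable M] (hM : HasHHEP L M) (hfin : IsLocallyFinite L M)
    {A : L.Substructure M} [Finite A] (f : A →[L] M) : ∃ g : M →[L] M, g.domRestrict A = f := by
  obtain ⟨S, hS, hSfin, hcover, rfl⟩ := hfin.exists_finite_exhaustion A
  exact exists_hom_of_forall_extends_succ hS hcover
    (fun n => hM.exists_comp_eq (S (n + 1)).subtype (Substructure.inclusion (hS n.le_succ))) f

theorem HasHHEP.isHHHomogeneous [Countable M] (hM : HasHHEP L M) (hfin : IsLocallyFinite L M) :
    IsHHHomogeneous L M := by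
  intro A B hA _ f
  have : Finite A := hA
  obtain ⟨g, hg⟩ := hM.exists_domRestrict_eq hfin (B.subtype.toHom.comp f)
  exact ⟨g, DFunLike.congr_fun hg⟩

theorem hh_homogeneous_iff_hhep_general [Countable M] (hfin : IsLocallyFinite L M) :
    IsHHHomogeneous L M ↔ HasHHEP L M :=
  ⟨IsHHHomogeneous.hasHHEP, fun hM => hM.isHHHomogeneous hfin⟩

end

theorem hh_homogeneous_iff_hhep (L : FirstOrder.Language.{u, v}) [L.IsRelational]
    (M : Type w) [L.Structure M] [Countable M] :
    IsHHHomogeneous L M ↔ HasHHEP L M :=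
  hh_homogeneous_iff_hhep_general (isLocallyFinite_of_isRelational L M)
end

section
/- Let σ be a relational first-order language. If a countable σ-structure M is HH-homogeneous, then Age(M) has the homo-amalgamation property (HAP): for all A, B1, B2 in Age(M), every homomorphism f1 : A → B1 and every embedding f2 : A → B2, there exist D in Age(M), an embedding g1 : B1 → D, and a homomorphism g2 : B2 → D such that g1 ∘ f1 = g2 ∘ f2. -/
open FirstOrder Language Structure CategoryTheory

universe u v w

variable {L : FirstOrder.Language.{u, v}}

/-- The age of `M`: the class of finite structures which embed into `M`. -/
def finAge (L : FirstOrder.Language.{u, v}) (M : Type w) [L.Structure M] :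
    Set (Bundled.{w} L.Structure) :=
  {B | Finite B ∧ Nonempty (B ↪[L] M)}

/-- A class of structures has the homo-amalgamation property (HAP). -/
def HasHAP (C : Set (Bundled.{w} L.Structure)) : Prop :=
  ∀ A B₁ B₂ : Bundled.{w} L.Structure, A ∈ C → B₁ ∈ C → B₂ ∈ C →
    ∀ (f₁ : A →[L] B₁) (f₂ : A ↪[L] B₂),
      ∃ D ∈ C, ∃ (g₁ : B₁ ↪[L] D) (g₂ : B₂ →[L] D), ∀ a : A, g₁ (f₁ a) = g₂ (f₂ a)

/-!
Realise `B₁` and `B₂` as finite substructures of `M`. Homogeneity extends `f₁`, read as a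
homomorphism from the copy of `A` inside `B₂` to `B₁`, to an endomorphism `g` of `M`. The amalgam
is the join of `B₁` and `g(B₂)` in `M`; in a relational language this is their union, hence finite.
-/

section

variable {M : Type w} [L.Structure M]

theorem coe_sup_of_isRelational [L.IsRelational] (S T : L.Substructure M) :
    ((S ⊔ T : L.Substructure M) : Set M) = (S : Set M) ∪ T := by
  rw [← Substructure.closure_eq_of_isRelational L (S ∪ T : Set M), Substructure.closure_union,
    Substructure.closure_eq, Substructure.closure_eq]

theorem IsHHHomogeneous.exists_extend (h : IsHHHomogeneous L M) {A B : Type*}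
    [L.Structure A] [L.Structure B] [Finite A] [Finite B]
    (i : A ↪[L] M) (j : B ↪[L] M) (f : A →[L] B) :
    ∃ g : M →[L] M, ∀ a, g (i a) = j (f a) := by
  obtain ⟨g, hg⟩ := h i.toHom.range j.toHom.range (Set.finite_range i) (Set.finite_range j)
    ((j.equivRange.toHom.comp f).comp i.equivRange.symm.toHom)
  refine ⟨g, fun a => ?_⟩
  calc
    g (i a) = j (f (i.equivRange.symm (i.equivRange a))) := hg (i.equivRange a)
    _ = j (f a) := by rw [i.equivRange.symm_apply_apply]

end

theorem age_hasHAP_of_hh_homogeneous_general (L : FirstOrder.Language.{u, v})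
    (M : Type w) [L.Structure M]
    (hsup : ∀ S T : L.Substructure M, (S : Set M).Finite → (T : Set M).Finite →
      ((S ⊔ T : L.Substructure M) : Set M).Finite)
    (h : IsHHHomogeneous L M) : HasHAP (finAge L M) := by
  rintro A B₁ B₂ ⟨_, _⟩ ⟨_, ⟨e₁⟩⟩ ⟨_, ⟨e₂⟩⟩ f₁ f₂
  obtain ⟨g, hg⟩ : ∃ g : M →[L] M, ∀ a, g (e₂ (f₂ a)) = e₁ (f₁ a) :=
    h.exists_extend (e₂.comp f₂) e₁ f₁
  let k : B₂ →[L] M := g.comp e₂.toHom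
  let D : L.Substructure M := e₁.toHom.range ⊔ k.range
  have e₁_mem (b : B₁) : e₁ b ∈ D := le_sup_left (a := e₁.toHom.range) ⟨b, rfl⟩
  have k_mem (b : B₂) : k b ∈ D := le_sup_right (b := k.range) ⟨b, rfl⟩
  have hD : (D : Set M).Finite := hsup _ _ (Set.finite_range e₁) (Set.finite_range k)
  exact ⟨⟨D, inferInstance⟩, ⟨hD.to_subtype, ⟨D.subtype⟩⟩,
    e₁.codRestrict D e₁_mem, k.codRestrict D k_mem, fun a => Subtype.ext (hg a).symm⟩

theorem age_hasHAP_of_hh_homogeneous (L : FirstOrder.Language.{u, v}) [L.IsRelational]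
    (M : Type w) [L.Structure M] [Countable M] (h : IsHHHomogeneous L M) :
    HasHAP (finAge L M) :=
  age_hasHAP_of_hh_homogeneous_general L M
    (fun S T hS hT => (coe_sup_of_isRelational S T).symm ▸ hS.union hT) h
end

section
/- Let σ be a relational first-order language and let M be a countable σ-structure. Then M is MB-homogeneous if and only if M has both the MM-extension property (MMEP) and the anti-MM-extension property: for every finite σ-structure B in Age(M), every substructure A of B, and every antimonomorphism f : A → M, there exists an antimonomorphism g : B → M whose restriction to A equals f. -/
/-!
The inverse of an antimonomorphism is a partial monomorphism, so in terms of finite partial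
monomorphisms of `M` the MMEP adds a point to the domain and the anti-MMEP adds a point to the
image. When `M` is countable, alternating the two extends a finite partial monomorphism to a
bijective endomorphism. Conversely, a bijective endomorphism `g` extending a partial monomorphism
restricts to the extension wanted by the MMEP, and its inverse restricts to the one wanted by the
anti-MMEP.
-/

open FirstOrder Language Structure

universe u v w

variable {L : FirstOrder.Language.{u, v}}

/-- An antimonomorphism is an injective map that preserves non-relations. -/
def IsAntimonomorphism (L : FirstOrder.Language.{u, v}) {A : Type*} {B : Type*}
    [L.Structure A] [L.Structure B] (f : A → B) : Prop :=
  Function.Injective f ∧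
    ∀ ⦃n : ℕ⦄ (r : L.Relations n) (x : Fin n → A),
      ¬ RelMap r x → ¬ RelMap r (f ∘ x)

/-- `M` is MB-homogeneous: every monomorphism between finite substructures of `M`
extends to a bijective endomorphism of `M`. -/
def IsMBHomogeneous (L : FirstOrder.Language.{u, v}) (M : Type w) [L.Structure M] : Prop :=
  ∀ (A B : L.Substructure M), (A : Set M).Finite → (B : Set M).Finite →
    ∀ f : A →[L] B, Function.Injective f →
      ∃ g : M →[L] M, Function.Bijective g ∧ ∀ a : A, g (a : M) = (f a : M)

/-- `M` has the MM-extension property. -/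
def HasMMEP (L : FirstOrder.Language.{u, v}) (M : Type w) [L.Structure M] : Prop :=
  ∀ (B : Type w) [L.Structure B], Finite B → Nonempty (B ↪[L] M) →
    ∀ (A : L.Substructure B) (f : A →[L] M), Function.Injective f →
      ∃ g : B →[L] M, Function.Injective g ∧ ∀ a : A, g (a : B) = f a

/-- `M` has the anti-MM-extension property: antimonomorphisms from substructures of members
of the age of `M` into `M` extend to antimonomorphisms of the larger structure. -/
def HasAntiMMEP (L : FirstOrder.Language.{u, v}) (M : Type w) [L.Structure M] : Prop :=
  ∀ (B : Type w) [L.Structure B], Finite B → Nonempty (B ↪[L] M) →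
    ∀ (A : L.Substructure B) (f : A → M), IsAntimonomorphism L f →
      ∃ g : B → M, IsAntimonomorphism L g ∧ ∀ a : A, g (a : B) = f a

section PartialMonomorphism

variable {M N P : Type*} [L.Structure M] [L.Structure N] [L.Structure P]

theorem IsAntimonomorphism.comp_embedding {f : N → P} (hf : IsAntimonomorphism L f)
    (e : M ↪[L] N) : IsAntimonomorphism L (f ∘ e) :=
  ⟨hf.1.comp e.injective, fun _ r x hx => hf.2 r (e ∘ x) (mt (e.map_rel r x).1 hx)⟩

theorem IsAntimonomorphism.of_rightInverse {g : M →[L] N} {s : N → M}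
    (hs : Function.RightInverse s g) : IsAntimonomorphism L s := by
  refine ⟨hs.injective, fun n r x => mt fun hsx => ?_⟩
  have hgsx : RelMap r (g ∘ s ∘ x) := g.map_rel r _ hsx
  rwa [← Function.comp_assoc, hs.comp_eq_id, Function.id_comp] at hgsx

/-- A partial monomorphism from `M` to `N`, encoded by its graph: a bijection between a subset
of `M` and a subset of `N` that preserves the relations of `L`. -/
structure IsPartialMonomorphism (L : FirstOrder.Language.{u, v}) {M N : Type*}
    [L.Structure M] [L.Structure N] (S : SetRel M N) : Prop where
  fst_eq_iff_snd_eq : ∀ ⦃a a' : M⦄ ⦃b b' : N⦄, (a, b) ∈ S → (a', b') ∈ S → (a = a' ↔ b = b')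
  map_rel : ∀ ⦃n : ℕ⦄ (r : L.Relations n) (x : Fin n → M) (y : Fin n → N),
    (∀ i, (x i, y i) ∈ S) → RelMap r x → RelMap r y

namespace IsPartialMonomorphism

variable {S : SetRel M N}

theorem snd_eq (hS : IsPartialMonomorphism L S) {a : M} {b b' : N} (h : (a, b) ∈ S)
    (h' : (a, b') ∈ S) : b = b' :=
  (hS.fst_eq_iff_snd_eq h h').1 rfl

theorem fst_eq (hS : IsPartialMonomorphism L S) {a a' : M} {b : N} (h : (a, b) ∈ S)
    (h' : (a', b) ∈ S) : a = a' :=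
  (hS.fst_eq_iff_snd_eq h h').2 rfl

theorem range_prodMk {ι : Type*} {u : ι → M} {v : ι → N} (hu : Function.Injective u)
    (hv : Function.Injective v)
    (huv : ∀ ⦃n : ℕ⦄ (r : L.Relations n) (z : Fin n → ι), RelMap r (u ∘ z) → RelMap r (v ∘ z)) :
    IsPartialMonomorphism L (Set.range fun i => (u i, v i)) where
  fst_eq_iff_snd_eq := by
    rintro _ _ _ _ ⟨i, ⟨⟩⟩ ⟨j, ⟨⟩⟩
    exact hu.eq_iff.trans hv.eq_iff.symm
  map_rel n r x y hxy := by
    choose z hz using hxy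
    obtain rfl : u ∘ z = x := funext fun i => congrArg Prod.fst (hz i)
    obtain rfl : v ∘ z = y := funext fun i => congrArg Prod.snd (hz i)
    exact huv r z

theorem range_hom (e : P ↪[L] M) {f : P →[L] N} (hf : Function.Injective f) :
    IsPartialMonomorphism L (Set.range fun p => (e p, f p)) :=
  range_prodMk e.injective hf fun _ r z hz => f.map_rel r z ((e.map_rel r z).1 hz)

theorem range_antimonomorphism {f : P → M} (hf : IsAntimonomorphism L f) (e : P ↪[L] N) :
    IsPartialMonomorphism L (Set.range fun p => (f p, e p)) :=
  range_prodMk hf.1 e.injective fun _ r z hz =>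
    (e.map_rel r z).2 (not_imp_not.1 (hf.2 r z) hz)

theorem exists_hom [L.IsRelational] (hS : IsPartialMonomorphism L S) (e : P ↪[L] M)
    (he : ∀ p, e p ∈ S.dom) :
    ∃ f : P →[L] N, Function.Injective f ∧ ∀ p, (e p, f p) ∈ S := by
  choose f hf using he
  exact ⟨{ toFun := f
           map_fun' := fun c => isEmptyElim c
           map_rel' := fun r x hx =>
            hS.map_rel r (e ∘ x) (f ∘ x) (fun i => hf (x i)) ((e.map_rel r x).2 hx) },
    fun p q hpq => e.injective ((hS.fst_eq_iff_snd_eq (hf p) (hf q)).2 hpq), hf⟩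

theorem exists_antimonomorphism (hS : IsPartialMonomorphism L S) (e : P ↪[L] N)
    (he : ∀ p, e p ∈ S.cod) :
    ∃ f : P → M, IsAntimonomorphism L f ∧ ∀ p, (f p, e p) ∈ S := by
  choose f hf using he
  exact ⟨f, ⟨fun p q hpq => e.injective ((hS.fst_eq_iff_snd_eq (hf p) (hf q)).1 hpq),
    fun n r x => mt fun hfx =>
      (e.map_rel r x).1 (hS.map_rel r (f ∘ x) (e ∘ x) (fun i => hf (x i)) hfx)⟩, hf⟩

theorem exists_bijective_hom [L.IsRelational] (hS : IsPartialMonomorphism L S)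
    (hdom : ∀ a, a ∈ S.dom) (hcod : ∀ b, b ∈ S.cod) :
    ∃ g : M →[L] N, Function.Bijective g ∧ S ⊆ Function.graph g := by
  obtain ⟨g, hg, hgS⟩ := hS.exists_hom (Embedding.refl L M) hdom
  have hSg : ∀ {a b}, (a, b) ∈ S → g a = b := fun {a _} hab => hS.snd_eq (hgS a) hab
  exact ⟨g, ⟨hg, fun b => (hcod b).imp fun _ => hSg⟩, fun _ => hSg⟩

theorem sUnion {C : Set (SetRel M N)} (hne : C.Nonempty) (hdir : DirectedOn (· ⊆ ·) C)
    (hC : ∀ S ∈ C, IsPartialMonomorphism L S) : IsPartialMonomorphism L (⋃₀ C) where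
  fst_eq_iff_snd_eq a a' b b' h h' := by
    obtain ⟨S, hSC, hS⟩ := hdir.exists_mem_subset_of_finite_of_subset_sUnion hne
      (Set.toFinite {(a, b), (a', b')}) (Set.pair_subset h h')
    exact (hC S hSC).fst_eq_iff_snd_eq (hS (Set.mem_insert _ _))
      (hS (Set.mem_insert_of_mem _ rfl))
  map_rel n r x y hxy := by
    obtain ⟨S, hSC, hS⟩ := hdir.exists_mem_subset_of_finite_of_subset_sUnion hne
      (Set.finite_range fun i => (x i, y i)) (Set.range_subset_iff.2 hxy)
    exact (hC S hSC).map_rel r x y fun i => hS (Set.mem_range_self i)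

end IsPartialMonomorphism

/-- The finite partial monomorphisms from `M` to `N`, ordered by inclusion of graphs; these are
the approximations used in the back-and-forth construction. -/
abbrev FinitePartialMonomorphism (L : FirstOrder.Language.{u, v}) (M N : Type*)
    [L.Structure M] [L.Structure N] : Type _ :=
  {S : SetRel M N // S.Finite ∧ IsPartialMonomorphism L S}

theorem FinitePartialMonomorphism.finite_dom (S : FinitePartialMonomorphism L M N) :
    S.1.dom.Finite :=
  (S.2.1.image Prod.fst).subset fun _ ⟨_, hab⟩ => ⟨_, hab, rfl⟩

theorem FinitePartialMonomorphism.finite_cod (S : FinitePartialMonomorphism L M N) :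
    S.1.cod.Finite :=
  (S.2.1.image Prod.snd).subset fun _ ⟨_, hab⟩ => ⟨_, hab, rfl⟩

theorem exists_bijective_hom_of_isCofinal [L.IsRelational] [Countable M] [Countable N]
    (forth : ∀ a : M, IsCofinal {T : FinitePartialMonomorphism L M N | a ∈ T.1.dom})
    (back : ∀ b : N, IsCofinal {T : FinitePartialMonomorphism L M N | b ∈ T.1.cod})
    (S : FinitePartialMonomorphism L M N) :
    ∃ g : M →[L] N, Function.Bijective g ∧ S.1 ⊆ Function.graph g := by
  have : Encodable (M ⊕ N) := Encodable.ofCountable _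
  let D : M ⊕ N → Order.Cofinal (FinitePartialMonomorphism L M N) :=
    Sum.elim (fun a => ⟨_, forth a⟩) (fun b => ⟨_, back b⟩)
  let I := Order.idealOfCofinals S D
  let U : SetRel M N := ⋃₀ (Subtype.val '' (I : Set (FinitePartialMonomorphism L M N)))
  have subset_U : ∀ T ∈ I, T.1 ⊆ U := fun T hT =>
    Set.subset_sUnion_of_mem (Set.mem_image_of_mem _ hT)
  have hU : IsPartialMonomorphism L U := by
    refine .sUnion (I.nonempty.image _) ?_ ?_
    · exact directedOn_image.2 I.directed
    · rintro _ ⟨T, -, rfl⟩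
      exact T.2.2
  have hdom : ∀ a, a ∈ U.dom := fun a => by
    obtain ⟨T, haT, hTI⟩ := Order.cofinal_meets_idealOfCofinals S D (.inl a)
    exact SetRel.dom_mono (subset_U T hTI) haT
  have hcod : ∀ b, b ∈ U.cod := fun b => by
    obtain ⟨T, ⟨a, hab⟩, hTI⟩ := Order.cofinal_meets_idealOfCofinals S D (.inr b)
    exact ⟨a, subset_U T hTI hab⟩
  obtain ⟨g, hg, hUg⟩ := hU.exists_bijective_hom hdom hcod
  exact ⟨g, hg, (subset_U S (Order.mem_idealOfCofinals S D)).trans hUg⟩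

end PartialMonomorphism

section Homogeneity

variable [L.IsRelational] {M : Type w} [L.Structure M]

theorem isMBHomogeneous_iff_forall_finitePartialMonomorphism :
    IsMBHomogeneous L M ↔ ∀ S : FinitePartialMonomorphism L M M,
      ∃ g : M →[L] M, Function.Bijective g ∧ S.1 ⊆ Function.graph g := by
  constructor
  · intro h S
    let A : L.Substructure M := Substructure.closure L S.1.dom
    have mem_A : ∀ {a}, a ∈ A ↔ a ∈ S.1.dom := Substructure.mem_closure_iff_of_isRelational L _ _
    have hA : (A : Set M).Finite := S.finite_dom.subset fun _ => mem_A.1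
    have : Finite A := hA
    obtain ⟨f, hf, hfS⟩ := S.2.2.exists_hom A.subtype fun a => mem_A.1 a.2
    have hrange : (f.range : Set M).Finite := f.range_coe ▸ Set.finite_range f
    obtain ⟨g, hg, hgf⟩ := h A f.range hA hrange (f.codRestrict f.range f.mem_range_self)
      fun a a' haa' => hf (congrArg Subtype.val haa')
    refine ⟨g, hg, fun ⟨a, b⟩ hab => ?_⟩
    have ha : a ∈ A := mem_A.2 ⟨b, hab⟩
    exact (hgf ⟨a, ha⟩).trans (S.2.2.snd_eq (hfS ⟨a, ha⟩) hab)
  · intro h A B hA _ f hf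
    have : Finite A := hA
    obtain ⟨g, hg, hfg⟩ := h ⟨_, Set.finite_range _, .range_hom A.subtype
      (f := B.subtype.toHom.comp f) (B.subtype.injective.comp hf)⟩
    exact ⟨g, hg, fun a => hfg ⟨a, rfl⟩⟩

theorem IsMBHomogeneous.hasMMEP (h : IsMBHomogeneous L M) : HasMMEP L M := by
  rintro B _ _ ⟨e⟩ A f hf
  obtain ⟨g, hg, hfg⟩ := isMBHomogeneous_iff_forall_finitePartialMonomorphism.1 h
    ⟨_, Set.finite_range _, .range_hom (e.comp A.subtype) hf⟩
  exact ⟨g.comp e.toHom, hg.injective.comp e.injective, fun a => hfg ⟨a, rfl⟩⟩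

theorem IsMBHomogeneous.hasAntiMMEP (h : IsMBHomogeneous L M) : HasAntiMMEP L M := by
  rintro B _ _ ⟨e⟩ A f hf
  obtain ⟨g, hg, hfg⟩ := isMBHomogeneous_iff_forall_finitePartialMonomorphism.1 h
    ⟨_, Set.finite_range _, .range_antimonomorphism hf (e.comp A.subtype)⟩
  obtain ⟨s, hs⟩ := hg.surjective.hasRightInverse
  have hgf : ∀ a, g (f a) = e a := fun a => hfg ⟨a, rfl⟩
  refine ⟨s ∘ e, (IsAntimonomorphism.of_rightInverse hs).comp_embedding e, fun a => ?_⟩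
  exact hg.injective ((hs (e a)).trans (hgf a).symm)

theorem HasMMEP.isCofinal_mem_dom (h : HasMMEP L M) (m : M) :
    IsCofinal {T : FinitePartialMonomorphism L M M | m ∈ T.1.dom} := by
  intro S
  let B : L.Substructure M := Substructure.closure L (insert m S.1.dom)
  have mem_B : ∀ {b}, b ∈ B ↔ b ∈ insert m S.1.dom :=
    Substructure.mem_closure_iff_of_isRelational L _ _
  have hB : Finite B := (S.finite_dom.insert m).subset fun _ => mem_B.1
  let A : L.Substructure B := Substructure.closure L {b | (b : M) ∈ S.1.dom}
  have mem_A : ∀ {b : B}, b ∈ A ↔ (b : M) ∈ S.1.dom :=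
    Substructure.mem_closure_iff_of_isRelational L _ _
  obtain ⟨f, hf, hfS⟩ := S.2.2.exists_hom (B.subtype.comp A.subtype) fun a => mem_A.1 a.2
  obtain ⟨g, hg, hgf⟩ := h B hB ⟨B.subtype⟩ A f hf
  refine ⟨⟨_, Set.finite_range _, .range_hom B.subtype hg⟩, ?_, ?_⟩
  · exact ⟨g ⟨m, mem_B.2 (Set.mem_insert _ _)⟩, ⟨m, _⟩, rfl⟩
  · rintro ⟨x, y⟩ hxy
    let b : B := ⟨x, mem_B.2 (.inr ⟨y, hxy⟩)⟩
    have hb : b ∈ A := mem_A.2 ⟨y, hxy⟩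
    have hgb : g b = y := (hgf ⟨b, hb⟩).trans (S.2.2.snd_eq (hfS ⟨b, hb⟩) hxy)
    exact ⟨b, Prod.ext rfl hgb⟩

theorem HasAntiMMEP.isCofinal_mem_cod (h : HasAntiMMEP L M) (m : M) :
    IsCofinal {T : FinitePartialMonomorphism L M M | m ∈ T.1.cod} := by
  intro S
  let B : L.Substructure M := Substructure.closure L (insert m S.1.cod)
  have mem_B : ∀ {b}, b ∈ B ↔ b ∈ insert m S.1.cod :=
    Substructure.mem_closure_iff_of_isRelational L _ _
  have hB : Finite B := (S.finite_cod.insert m).subset fun _ => mem_B.1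
  let A : L.Substructure B := Substructure.closure L {b | (b : M) ∈ S.1.cod}
  have mem_A : ∀ {b : B}, b ∈ A ↔ (b : M) ∈ S.1.cod :=
    Substructure.mem_closure_iff_of_isRelational L _ _
  obtain ⟨f, hf, hfS⟩ :=
    S.2.2.exists_antimonomorphism (B.subtype.comp A.subtype) fun a => mem_A.1 a.2
  obtain ⟨g, hg, hgf⟩ := h B hB ⟨B.subtype⟩ A f hf
  refine ⟨⟨_, Set.finite_range _, .range_antimonomorphism hg B.subtype⟩, ?_, ?_⟩
  · exact ⟨g ⟨m, mem_B.2 (Set.mem_insert _ _)⟩, ⟨m, _⟩, rfl⟩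
  · rintro ⟨x, y⟩ hxy
    let b : B := ⟨y, mem_B.2 (.inr ⟨x, hxy⟩)⟩
    have hb : b ∈ A := mem_A.2 ⟨x, hxy⟩
    have hgb : g b = x := (hgf ⟨b, hb⟩).trans (S.2.2.fst_eq (hfS ⟨b, hb⟩) hxy)
    exact ⟨b, Prod.ext hgb rfl⟩

end Homogeneity

theorem mb_homogeneous_iff_mmep_and_antiMMEP (L : FirstOrder.Language.{u, v}) [L.IsRelational]
    (M : Type w) [L.Structure M] [Countable M] :
    IsMBHomogeneous L M ↔ (HasMMEP L M ∧ HasAntiMMEP L M) := by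
  constructor
  · exact fun h => ⟨h.hasMMEP, h.hasAntiMMEP⟩
  · rintro ⟨hMM, hAntiMM⟩
    exact isMBHomogeneous_iff_forall_finitePartialMonomorphism.2
      (exists_bijective_hom_of_isCofinal hMM.isCofinal_mem_dom hAntiMM.isCofinal_mem_cod)
end

section
/- Let σ be a relational first-order language. If a countable σ-structure M is MB-homogeneous, then Age(M) has both the mono-amalgamation property (MAP) and the bi-amalgamation property (BAP): for all A, B1, B2 in Age(M), every antimonomorphism f1 : A → B1 and every embedding f2 : A → B2, there exist D in Age(M), an embedding g1 : B1 → D, and an antimonomorphism g2 : B2 → D such that g1 ∘ f1 = g2 ∘ f2. -/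
open FirstOrder Language Structure CategoryTheory

universe u v w

variable {L : FirstOrder.Language.{u, v}}

/-- A class of structures has the mono-amalgamation property (MAP). -/
def HasMAP (C : Set (Bundled.{w} L.Structure)) : Prop :=
  ∀ A B₁ B₂ : Bundled.{w} L.Structure, A ∈ C → B₁ ∈ C → B₂ ∈ C →
    ∀ (f₁ : A →[L] B₁), Function.Injective f₁ → ∀ (f₂ : A ↪[L] B₂),
      ∃ D ∈ C, ∃ (g₁ : B₁ ↪[L] D) (g₂ : B₂ →[L] D),
        Function.Injective g₂ ∧ ∀ a : A, g₁ (f₁ a) = g₂ (f₂ a)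

/-- A class of structures has the bi-amalgamation property (BAP). -/
def HasBAP (C : Set (Bundled.{w} L.Structure)) : Prop :=
  ∀ A B₁ B₂ : Bundled.{w} L.Structure, A ∈ C → B₁ ∈ C → B₂ ∈ C →
    ∀ (f₁ : A → B₁), IsAntimonomorphism L f₁ → ∀ (f₂ : A ↪[L] B₂),
      ∃ D ∈ C, ∃ (g₁ : B₁ ↪[L] D) (g₂ : B₂ → D),
        IsAntimonomorphism L g₂ ∧ ∀ a : A, g₁ (f₁ a) = g₂ (f₂ a)

/-!
Embed `B₁` and `B₂` into `M` by `e₁` and `e₂`. For a monomorphism `f₁`, the map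
`e₂ (f₂ a) ↦ e₁ (f₁ a)` extends to a bijective endomorphism `g` of `M`, and the image of `B₁` under
`e₁` together with that of `B₂` under `g ∘ e₂` is an amalgam. The inverse of an antimonomorphism
`f₁` is a monomorphism on the range of `f₁`, so in that case it is `e₁ (f₁ a) ↦ e₂ (f₂ a)` which
extends to a bijective endomorphism `g`; now `g⁻¹` is an antimonomorphism and `g⁻¹ ∘ e₂` takes the
place of `g ∘ e₂`.
-/

section Antimonomorphism

variable {A B C : Type*} [L.Structure A] [L.Structure B] [L.Structure C]

namespace IsAntimonomorphism

theorem of_embedding (f : A ↪[L] B) : IsAntimonomorphism L f :=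
  ⟨f.injective, fun _ r x hx => mt (f.map_rel r x).mp hx⟩

theorem of_rightInverse_s9 {g : A →[L] B} {k : B → A} (hk : Function.RightInverse k g) :
    IsAntimonomorphism L k := by
  refine ⟨hk.injective, fun n r x hx hkx => hx ?_⟩
  have hgk : g ∘ k ∘ x = x := funext fun i => hk (x i)
  exact hgk ▸ g.map_rel r (k ∘ x) hkx

theorem comp {g : B → C} {f : A → B} (hg : IsAntimonomorphism L g)
    (hf : IsAntimonomorphism L f) : IsAntimonomorphism L (g ∘ f) :=
  ⟨hg.1.comp hf.1, fun _ r x hx => hg.2 r (f ∘ x) (hf.2 r x hx)⟩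

theorem codRestrict {f : A → B} (hf : IsAntimonomorphism L f) (S : L.Substructure B)
    (hS : ∀ a, f a ∈ S) : IsAntimonomorphism L (fun a => (⟨f a, hS a⟩ : S)) :=
  ⟨hf.1.codRestrict hS, fun _ r x hx => hf.2 r x hx⟩

theorem exists_leftInverse_hom [L.IsRelational] {f : A → B} (hf : IsAntimonomorphism L f) :
    ∃ u : Substructure.closure L (Set.range f) →[L] A, Function.Injective u ∧
      ∀ a, u ⟨f a, Substructure.subset_closure (Set.mem_range_self a)⟩ = a := by
  have exists_preimage (s : Substructure.closure L (Set.range f)) : ∃ a, f a = s :=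
    (Substructure.mem_closure_iff_of_isRelational L (Set.range f) s).mp s.2
  choose u hu using exists_preimage
  have map_rel {n : ℕ} (r : L.Relations n) (x : Fin n → Substructure.closure L (Set.range f))
      (hx : RelMap r x) : RelMap r (u ∘ x) := by
    have hfu : f ∘ u ∘ x = Subtype.val ∘ x := funext fun i => hu (x i)
    by_contra hux
    exact hf.2 r (u ∘ x) hux (hfu ▸ hx)
  refine ⟨⟨u, isEmptyElim, map_rel⟩, fun s t hst => ?_, fun a => hf.1 (hu _)⟩
  exact Subtype.ext ((hu s).symm.trans ((congrArg f hst).trans (hu t)))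

end IsAntimonomorphism

end Antimonomorphism

section Age

variable {M : Type w} [L.Structure M]

theorem substructure_mem_finAge (S : L.Substructure M) [Finite S] :
    (⟨S, inferInstance⟩ : Bundled.{w} L.Structure) ∈ finAge L M :=
  ⟨‹Finite S›, ⟨S.subtype⟩⟩

theorem exists_finite_substructure_superset [L.IsRelational] {s : Set M} (hs : s.Finite) :
    ∃ S : L.Substructure M, Finite S ∧ s ⊆ S := by
  refine ⟨Substructure.closure L s, ?_, Substructure.subset_closure⟩
  exact Set.Finite.to_subtype (by rwa [Substructure.closure_eq_of_isRelational])

theorem exists_finite_substructure_forall_mem [L.IsRelational] {ι κ : Type*} [Finite ι] [Finite κ]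
    (p : ι → M) (q : κ → M) :
    ∃ S : L.Substructure M, Finite S ∧ (∀ i, p i ∈ S) ∧ ∀ k, q k ∈ S := by
  obtain ⟨S, hfin, hS⟩ := exists_finite_substructure_superset (L := L)
    ((Set.finite_range p).union (Set.finite_range q))
  exact ⟨S, hfin, fun i => hS (.inl ⟨i, rfl⟩), fun k => hS (.inr ⟨k, rfl⟩)⟩

end Age

namespace IsMBHomogeneous

variable {M : Type w} [L.Structure M]

theorem exists_bijective_extension (h : IsMBHomogeneous L M) (S : L.Substructure M) [Finite S]
    {f : S →[L] M} (hf : Function.Injective f) :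
    ∃ g : M →[L] M, Function.Bijective g ∧ ∀ s : S, g s = f s :=
  h S f.range (Set.toFinite _) (Set.finite_range f) (f.codRestrict f.range f.mem_range_self)
    (Set.injective_codRestrict f.mem_range_self |>.mpr hf)

theorem exists_bijective_comp_embedding_eq (h : IsMBHomogeneous L M) {A : Type*} [L.Structure A]
    [Finite A] (e : A ↪[L] M) {f : A →[L] M} (hf : Function.Injective f) :
    ∃ g : M →[L] M, Function.Bijective g ∧ ∀ a, g (e a) = f a := by
  have : Finite e.toHom.range := Set.finite_range e
  obtain ⟨g, hg, hgf⟩ := h.exists_bijective_extension e.toHom.range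
    (f := f.comp e.equivRange.symm.toHom) (hf.comp e.equivRange.symm.injective)
  refine ⟨g, hg, fun a => ?_⟩
  calc g (e a) = f (e.equivRange.symm (e.equivRange a)) := hgf (e.equivRange a)
    _ = f a := by rw [Language.Equiv.symm_apply_apply]

theorem hasMAP_finAge [L.IsRelational] (h : IsMBHomogeneous L M) : HasMAP (finAge L M) := by
  rintro A B₁ B₂ ⟨_, _⟩ ⟨_, ⟨e₁⟩⟩ ⟨_, ⟨e₂⟩⟩ f₁ hf₁ f₂
  obtain ⟨g, hg, hgf⟩ := h.exists_bijective_comp_embedding_eq (e₂.comp f₂)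
    (f := e₁.toHom.comp f₁) (e₁.injective.comp hf₁)
  obtain ⟨S, _, hS₁, hS₂⟩ := exists_finite_substructure_forall_mem (L := L) e₁ (g ∘ e₂)
  refine ⟨⟨S, inferInstance⟩, substructure_mem_finAge S, e₁.codRestrict S hS₁,
    (g.comp e₂.toHom).codRestrict S hS₂, ?_, fun a => Subtype.ext (hgf a).symm⟩
  exact (hg.injective.comp e₂.injective).codRestrict hS₂

theorem hasBAP_finAge [L.IsRelational] (h : IsMBHomogeneous L M) : HasBAP (finAge L M) := by
  rintro A B₁ B₂ ⟨_, _⟩ ⟨_, ⟨e₁⟩⟩ ⟨_, ⟨e₂⟩⟩ f₁ hf₁ f₂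
  obtain ⟨u, hu, huf⟩ := hf₁.exists_leftInverse_hom
  obtain ⟨g, hg, hgu⟩ := h.exists_bijective_comp_embedding_eq (e₁.domRestrict _)
    (f := (e₂.comp f₂).toHom.comp u) ((e₂.comp f₂).injective.comp hu)
  have hgf (a : A) : g (e₁ (f₁ a)) = e₂ (f₂ a) := (hgu _).trans (congrArg (e₂ ∘ f₂) (huf a))
  obtain ⟨k, hkg, hgk⟩ := Function.bijective_iff_has_inverse.mp hg
  have hke₂ : IsAntimonomorphism L (k ∘ e₂) :=
    (IsAntimonomorphism.of_rightInverse_s9 hgk).comp (.of_embedding e₂)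
  obtain ⟨S, _, hS₁, hS₂⟩ := exists_finite_substructure_forall_mem (L := L) e₁ (k ∘ e₂)
  refine ⟨⟨S, inferInstance⟩, substructure_mem_finAge S, e₁.codRestrict S hS₁,
    fun b => ⟨k (e₂ b), hS₂ b⟩, hke₂.codRestrict S hS₂, fun a => Subtype.ext ?_⟩
  calc e₁ (f₁ a) = k (g (e₁ (f₁ a))) := (hkg _).symm
    _ = k (e₂ (f₂ a)) := by rw [hgf]

end IsMBHomogeneous

theorem age_hasMAP_and_hasBAP_of_mb_homogeneous_general (L : FirstOrder.Language.{u, v})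
    [L.IsRelational] (M : Type w) [L.Structure M] (h : IsMBHomogeneous L M) :
    HasMAP (finAge L M) ∧ HasBAP (finAge L M) :=
  ⟨h.hasMAP_finAge, h.hasBAP_finAge⟩

theorem age_hasMAP_and_hasBAP_of_mb_homogeneous (L : FirstOrder.Language.{u, v})
    [L.IsRelational] (M : Type w) [L.Structure M] [Countable M]
    (h : IsMBHomogeneous L M) :
    HasMAP (finAge L M) ∧ HasBAP (finAge L M) :=
  age_hasMAP_and_hasBAP_of_mb_homogeneous_general L M h
end

section
/- Let σ be a relational first-order language and let M and N be countable MB-homogeneous σ-structures with Age(M) = Age(N). Then M and N are bi-equivalent: every embedding from a finite substructure of M into N extends to a bijective homomorphism M → N, and every embedding from a finite substructure of N into M extends to a bijective homomorphism N → M. -/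
open FirstOrder Language Structure

universe u v w

variable {L : FirstOrder.Language.{u, v}}

/-- Every embedding from a finite substructure of `M` into `N` extends to a
bijective homomorphism `M → N`. -/
def BiExtendable (L : FirstOrder.Language.{u, v}) (M N : Type w)
    [L.Structure M] [L.Structure N] : Prop :=
  ∀ A : L.Substructure M, (A : Set M).Finite →
    ∀ f : A ↪[L] N, ∃ g : M →[L] N, Function.Bijective g ∧ ∀ a : A, g (a : M) = f a

/-!
Back and forth between `M` and `N` with finite partial monomorphisms `R`. Given `c : M`, embed the
finite substructure `dom R ∪ {c}` into `N` by some `e`. Then `R ∘ e⁻¹` is a monomorphism between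
finite substructures of `N`, so it extends to an injective endomorphism `g` of `N`, and `g ∘ e`
extends `R` to `c`. Given `d : N`, embed `cod R ∪ {d}` into `M` by some `e` and extend `e ∘ R` to a
bijective endomorphism `g` of `M`; the preimage of `d` is then `g⁻¹ (e d)`, and `e⁻¹ ∘ g` is a
monomorphism where it is defined because `e` reflects relations.
-/

open scoped SetRel

section FiniteRelations

variable {α β γ : Type*} {R : SetRel α β} {S : SetRel β γ}

theorem finite_setRel_dom (hR : R.Finite) : R.dom.Finite := by
  refine (hR.image Prod.fst).subset ?_
  rintro a ⟨b, hab⟩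
  exact ⟨_, hab, rfl⟩

theorem finite_setRel_inv (hR : R.Finite) : R.inv.Finite :=
  hR.preimage Prod.swap_injective.injOn

theorem finite_setRel_cod (hR : R.Finite) : R.cod.Finite :=
  finite_setRel_dom (finite_setRel_inv hR)

theorem finite_setRel_comp (hR : R.Finite) (hS : S.Finite) : (R ○ S).Finite := by
  refine ((finite_setRel_dom hR).prod (finite_setRel_cod hS)).subset ?_
  rintro ⟨a, c⟩ ⟨b, hab, hbc⟩
  exact ⟨⟨b, hab⟩, ⟨b, hbc⟩⟩

end FiniteRelations

section PartialMonomorphisms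

/-- `R` is the graph of a partial monomorphism from `M` to `N`: it is single-valued and injective
and preserves all relations. Partial monomorphisms are encoded by their graphs, so that extension
is inclusion. -/
structure IsPartialMono (L : FirstOrder.Language.{u, v}) {M N : Type*} [L.Structure M]
    [L.Structure N] (R : SetRel M N) : Prop where
  eq_iff : ∀ {a a' : M} {b b' : N}, a ~[R] b → a' ~[R] b' → (a = a' ↔ b = b')
  map_rel : ∀ {n : ℕ} (r : L.Relations n) {x : Fin n → M} {y : Fin n → N},
    (∀ i, x i ~[R] y i) → RelMap r x → RelMap r y

variable {M N K : Type*} [L.Structure M] [L.Structure N] [L.Structure K]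

/-- The graph of a map defined on a substructure `A` of `M`, as a relation on all of `M`. -/
def partialGraph {α : Type*} {A : L.Substructure M} (f : A → α) : SetRel M α :=
  {(a, b) | ∃ x : A, x = a ∧ f x = b}

theorem partialGraph_subset_graph {α : Type*} {A : L.Substructure M} {f : A → α} {g : M → α} :
    partialGraph f ⊆ Function.graph g ↔ ∀ a : A, g a = f a := by
  constructor
  · exact fun h a => @h (↑a, f a) ⟨a, rfl, rfl⟩
  · rintro h ⟨_, _⟩ ⟨a, rfl, rfl⟩
    exact h a

theorem finite_partialGraph {α : Type*} {A : L.Substructure M} (hA : (A : Set M).Finite)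
    (f : A → α) : (partialGraph f).Finite := by
  have : Finite A := hA
  refine (Set.finite_range fun a : A => ((a : M), f a)).subset ?_
  rintro ⟨_, _⟩ ⟨a, rfl, rfl⟩
  exact ⟨a, rfl⟩

namespace IsPartialMono

theorem mono {R S : SetRel M N} (hS : IsPartialMono L S) (hRS : R ⊆ S) : IsPartialMono L R where
  eq_iff h h' := hS.eq_iff (hRS h) (hRS h')
  map_rel r _ _ h := hS.map_rel r fun i => hRS (h i)

theorem comp {R : SetRel M N} {S : SetRel N K} (hR : IsPartialMono L R)
    (hS : IsPartialMono L S) : IsPartialMono L (R ○ S) where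
  eq_iff := by
    rintro _ _ _ _ ⟨b, hab, hbc⟩ ⟨b', hab', hbc'⟩
    exact (hR.eq_iff hab hab').trans (hS.eq_iff hbc hbc')
  map_rel r _ _ h hx := by
    choose y hxy hyz using h
    exact hS.map_rel r hyz (hR.map_rel r hxy hx)

theorem comap {M' N' : Type*} [L.Structure M'] [L.Structure N'] {R : SetRel M N}
    (hR : IsPartialMono L R) (i : M' ↪[L] M) (j : N' ↪[L] N) :
    IsPartialMono L {(a, b) | i a ~[R] j b} where
  eq_iff h h' := i.injective.eq_iff.symm.trans ((hR.eq_iff h h').trans j.injective.eq_iff)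
  map_rel r x y h hx := (j.map_rel r y).1 (hR.map_rel r h ((i.map_rel r x).2 hx))

theorem graph (f : M →[L] N) (hf : Function.Injective f) :
    IsPartialMono L (Function.graph f) where
  eq_iff := by
    rintro _ _ _ _ rfl rfl
    exact hf.eq_iff.symm
  map_rel r x y h hx := by
    obtain rfl : f ∘ x = y := funext h
    exact f.map_rel r x hx

theorem graph_inv (e : M ↪[L] N) : IsPartialMono L (Function.graph e).inv where
  eq_iff := by
    rintro _ _ b b' (rfl : e b = _) (rfl : e b' = _)
    exact e.injective.eq_iff
  map_rel r x y h hx := by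
    obtain rfl : e ∘ y = x := funext h
    exact (e.map_rel r y).1 hx

protected theorem partialGraph {A : L.Substructure M} (f : A →[L] N) (hf : Function.Injective f) :
    IsPartialMono L (partialGraph f) :=
  (graph_inv A.subtype).comp (graph f hf)

theorem partialGraph_inv {A : L.Substructure M} (e : A ↪[L] N) :
    IsPartialMono L (partialGraph e).inv := by
  refine ((graph_inv e).comp (graph A.subtype.toHom A.subtype.injective)).mono ?_
  rintro ⟨_, _⟩ ⟨a, ha, hea⟩
  exact ⟨a, hea, ha⟩

theorem sUnion {C : Set (SetRel M N)} (hne : C.Nonempty) (hdir : DirectedOn (· ⊆ ·) C)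
    (hC : ∀ R ∈ C, IsPartialMono L R) : IsPartialMono L (⋃₀ C) where
  eq_iff := by
    rintro _ _ _ _ ⟨R, hR, hab⟩ ⟨R', hR', hab'⟩
    obtain ⟨S, hS, hRS, hRS'⟩ := hdir R hR R' hR'
    exact (hC S hS).eq_iff (hRS hab) (hRS' hab')
  map_rel r x y h := by
    -- Finitely many pairs `(x i, y i)` lie in a single member; `hne` covers the empty tuple.
    obtain ⟨S, hS, hxy⟩ := hdir.exists_mem_subset_of_finite_of_subset_sUnion hne
      (Set.finite_range fun i => (x i, y i)) (Set.range_subset_iff.2 h)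
    exact (hC S hS).map_rel r fun i => hxy ⟨i, rfl⟩

theorem exists_hom_of_dom_eq_univ [L.IsRelational] {R : SetRel M N} (hR : IsPartialMono L R)
    (hdom : R.dom = Set.univ) :
    ∃ f : M →[L] N, Function.Injective f ∧ Function.graph f = R := by
  obtain ⟨f, hf, -⟩ := R.exists_graph_eq_iff.2 fun a => by
    obtain ⟨b, hab⟩ := Set.eq_univ_iff_forall.1 hdom a
    exact ⟨b, hab, fun b' hab' => (hR.eq_iff hab' hab).1 rfl⟩
  have hfR (a : M) : a ~[R] f a := hf ▸ rfl
  refine ⟨{ toFun := f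
            map_fun' := fun φ => isEmptyElim φ
            map_rel' := fun r x => hR.map_rel r fun i => hfR (x i) }, ?_, hf⟩
  exact fun a b hab => (hR.eq_iff (hfR a) (hfR b)).2 hab

theorem exists_partialGraph_eq [L.IsRelational] {R : SetRel M N} (hR : IsPartialMono L R)
    (hfin : R.Finite) :
    ∃ (A : L.Substructure M) (B : L.Substructure N) (f : A →[L] B), (A : Set M).Finite ∧
      (B : Set N).Finite ∧ Function.Injective f ∧ partialGraph (fun a => (f a : N)) = R := by
  let A := Substructure.closure L R.dom
  let B := Substructure.closure L R.cod
  have hA : (A : Set M) = R.dom := Substructure.closure_eq_of_isRelational L _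
  have hB : (B : Set N) = R.cod := Substructure.closure_eq_of_isRelational L _
  obtain ⟨f, hf, hfR⟩ := (hR.comap A.subtype B.subtype).exists_hom_of_dom_eq_univ <|
    Set.eq_univ_of_forall fun a => by
      obtain ⟨b, hab⟩ := hA.le a.2
      exact ⟨⟨b, hB.ge ⟨a, hab⟩⟩, hab⟩
  refine ⟨A, B, f, hA ▸ finite_setRel_dom hfin, hB ▸ finite_setRel_cod hfin, hf,
    Set.ext fun ⟨a, b⟩ => ⟨?_, ?_⟩⟩
  · rintro ⟨x, rfl, rfl⟩
    have hx : x ~[Function.graph f] f x := rfl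
    exact hfR.le hx
  · intro hab
    have hfab : ⟨a, hA.ge ⟨b, hab⟩⟩ ~[Function.graph f] ⟨b, hB.ge ⟨a, hab⟩⟩ := hfR.ge hab
    exact ⟨_, rfl, congrArg Subtype.val hfab⟩

theorem exists_total_extension [Countable M] [Countable N]
    (forth : ∀ R : SetRel M N, R.Finite → IsPartialMono L R →
      ∀ c, ∃ d, IsPartialMono L (insert (c, d) R))
    (back : ∀ R : SetRel M N, R.Finite → IsPartialMono L R →
      ∀ d, ∃ c, IsPartialMono L (insert (c, d) R))
    {R : SetRel M N} (hfin : R.Finite) (hR : IsPartialMono L R) :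
    ∃ S : SetRel M N, IsPartialMono L S ∧ R ⊆ S ∧ S.dom = Set.univ ∧ S.cod = Set.univ := by
  let P := {R : SetRel M N // R.Finite ∧ IsPartialMono L R}
  let definedAt (c : M) : Order.Cofinal P :=
    { carrier := {R | c ∈ R.1.dom}
      isCofinal := fun ⟨R, hfin, hR⟩ => by
        obtain ⟨d, hd⟩ := forth R hfin hR c
        exact ⟨⟨_, hfin.insert _, hd⟩, ⟨d, Set.mem_insert _ _⟩, Set.subset_insert _ _⟩ }
  let hitting (d : N) : Order.Cofinal P :=
    { carrier := {R | d ∈ R.1.cod}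
      isCofinal := fun ⟨R, hfin, hR⟩ => by
        obtain ⟨c, hc⟩ := back R hfin hR d
        exact ⟨⟨_, hfin.insert _, hc⟩, ⟨c, Set.mem_insert _ _⟩, Set.subset_insert _ _⟩ }
  let : Encodable (M ⊕ N) := Encodable.ofCountable _
  let D : M ⊕ N → Order.Cofinal P := Sum.elim definedAt hitting
  let R₀ : P := ⟨R, hfin, hR⟩
  let I : Order.Ideal P := Order.idealOfCofinals R₀ D
  have hR₀ : R₀ ∈ I := Order.mem_idealOfCofinals R₀ D
  have hdir : DirectedOn (· ⊆ ·) (Subtype.val '' (I : Set P)) :=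
    directedOn_image.2 I.directed
  have hI : ∀ S ∈ Subtype.val '' (I : Set P), IsPartialMono L S := by
    rintro _ ⟨S, -, rfl⟩
    exact S.2.2
  refine ⟨⋃₀ (Subtype.val '' (I : Set P)), .sUnion ⟨R, R₀, hR₀, rfl⟩ hdir hI,
    Set.subset_sUnion_of_mem ⟨R₀, hR₀, rfl⟩, Set.eq_univ_of_forall fun c => ?_,
    Set.eq_univ_of_forall fun d => ?_⟩
  · obtain ⟨S, ⟨d, hcd⟩, hS⟩ := Order.cofinal_meets_idealOfCofinals R₀ D (Sum.inl c)
    exact ⟨d, S, ⟨S, hS, rfl⟩, hcd⟩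
  · obtain ⟨S, ⟨c, hcd⟩, hS⟩ := Order.cofinal_meets_idealOfCofinals R₀ D (Sum.inr d)
    exact ⟨c, S, ⟨S, hS, rfl⟩, hcd⟩

end IsPartialMono

end PartialMonomorphisms

section Homogeneity

variable {M N : Type*} [L.Structure M] [L.Structure N]

/-- `M` is MM-homogeneous: every monomorphism between finite substructures of `M` extends to an
injective endomorphism of `M`. -/
def IsMMHomogeneous (L : FirstOrder.Language.{u, v}) (M : Type*) [L.Structure M] : Prop :=
  ∀ (A B : L.Substructure M), (A : Set M).Finite → (B : Set M).Finite →
    ∀ f : A →[L] B, Function.Injective f →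
      ∃ g : M →[L] M, Function.Injective g ∧ ∀ a : A, g (a : M) = (f a : M)

/-- Every finite substructure of `M` embeds into `N`. In a relational language this expresses
`Age(M) ⊆ Age(N)`, also for structures in different universes. -/
def AgeSubset (L : FirstOrder.Language.{u, v}) (M N : Type*) [L.Structure M] [L.Structure N] :
    Prop :=
  ∀ A : L.Substructure M, (A : Set M).Finite → Nonempty (A ↪[L] N)

theorem IsMBHomogeneous.isMMHomogeneous (hM : IsMBHomogeneous L M) : IsMMHomogeneous L M :=
  fun A B hA hB f hf =>
    let ⟨g, hg, hgf⟩ := hM A B hA hB f hf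
    ⟨g, hg.injective, hgf⟩

variable [L.IsRelational]

theorem IsMMHomogeneous.exists_subset_graph (hM : IsMMHomogeneous L M) {R : SetRel M M}
    (hfin : R.Finite) (hR : IsPartialMono L R) :
    ∃ g : M →[L] M, Function.Injective g ∧ R ⊆ Function.graph g := by
  obtain ⟨A, B, f, hA, hB, hf, rfl⟩ := hR.exists_partialGraph_eq hfin
  obtain ⟨g, hg, hgf⟩ := hM A B hA hB f hf
  exact ⟨g, hg, partialGraph_subset_graph.2 hgf⟩

theorem IsMBHomogeneous.exists_subset_graph (hM : IsMBHomogeneous L M) {R : SetRel M M}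
    (hfin : R.Finite) (hR : IsPartialMono L R) :
    ∃ g : M →[L] M, Function.Bijective g ∧ R ⊆ Function.graph g := by
  obtain ⟨A, B, f, hA, hB, hf, rfl⟩ := hR.exists_partialGraph_eq hfin
  obtain ⟨g, hg, hgf⟩ := hM A B hA hB f hf
  exact ⟨g, hg, partialGraph_subset_graph.2 hgf⟩

theorem AgeSubset.exists_partialEmbedding (hMN : AgeSubset L M N) {S : Set M} (hS : S.Finite) :
    ∃ E : SetRel M N, E.Finite ∧ IsPartialMono L E ∧ IsPartialMono L E.inv ∧ S ⊆ E.dom := by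
  let A := Substructure.closure L S
  have hA : (A : Set M) = S := Substructure.closure_eq_of_isRelational L S
  obtain ⟨e⟩ := hMN A (hA ▸ hS)
  exact ⟨partialGraph e, finite_partialGraph (hA ▸ hS) e, .partialGraph e.toHom e.injective,
    .partialGraph_inv e, fun a ha => ⟨e ⟨a, hA.ge ha⟩, ⟨a, hA.ge ha⟩, rfl, rfl⟩⟩

theorem IsPartialMono.exists_insert_left (hN : IsMMHomogeneous L N) (hMN : AgeSubset L M N)
    {R : SetRel M N} (hfin : R.Finite) (hR : IsPartialMono L R) (c : M) :
    ∃ d, IsPartialMono L (insert (c, d) R) := by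
  obtain ⟨E, hEfin, hE, hEinv, hdom⟩ :=
    hMN.exists_partialEmbedding ((finite_setRel_dom hfin).insert c)
  obtain ⟨g, hg, hRg⟩ := hN.exists_subset_graph
    (finite_setRel_comp (finite_setRel_inv hEfin) hfin) (hEinv.comp hR)
  obtain ⟨c', hcc'⟩ := hdom (Set.mem_insert _ _)
  refine ⟨g c', (hE.comp (.graph g hg)).mono (Set.insert_subset ⟨c', hcc', rfl⟩ ?_)⟩
  rintro ⟨a, b⟩ hab
  obtain ⟨a', haa'⟩ := hdom (Set.mem_insert_of_mem _ ⟨_, hab⟩)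
  exact ⟨a', haa', hRg ⟨a, haa', hab⟩⟩

theorem IsPartialMono.exists_insert_right (hM : IsMBHomogeneous L M) (hNM : AgeSubset L N M)
    {R : SetRel M N} (hfin : R.Finite) (hR : IsPartialMono L R) (d : N) :
    ∃ c, IsPartialMono L (insert (c, d) R) := by
  obtain ⟨E, hEfin, hE, hEinv, hdom⟩ :=
    hNM.exists_partialEmbedding ((finite_setRel_cod hfin).insert d)
  obtain ⟨g, hg, hRg⟩ := hM.exists_subset_graph (finite_setRel_comp hfin hEfin) (hR.comp hE)
  obtain ⟨d', hdd'⟩ := hdom (Set.mem_insert _ _)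
  obtain ⟨c, hcd'⟩ := hg.surjective d'
  refine ⟨c, ((IsPartialMono.graph g hg.injective).comp hEinv).mono
    (Set.insert_subset ⟨d', hcd', hdd'⟩ ?_)⟩
  rintro ⟨a, b⟩ hab
  obtain ⟨b', hbb'⟩ := hdom (Set.mem_insert_of_mem _ ⟨_, hab⟩)
  exact ⟨b', hRg ⟨b, hab, hbb'⟩, hbb'⟩

theorem bi_equivalent_of_mb_homogeneous_general [Countable M] [Countable N]
    (hM : IsMBHomogeneous L M) (hN : IsMMHomogeneous L N) (hMN : AgeSubset L M N)
    (hNM : AgeSubset L N M) {A : L.Substructure M} (hA : (A : Set M).Finite) (f : A →[L] N)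
    (hf : Function.Injective f) :
    ∃ g : M →[L] N, Function.Bijective g ∧ ∀ a : A, g (a : M) = f a := by
  obtain ⟨S, hS, hfS, hdom, hcod⟩ := IsPartialMono.exists_total_extension
    (fun _ hfin hR => hR.exists_insert_left hN hMN hfin)
    (fun _ hfin hR => hR.exists_insert_right hM hNM hfin)
    (finite_partialGraph hA f) (.partialGraph f hf)
  obtain ⟨g, hg, rfl⟩ := hS.exists_hom_of_dom_eq_univ hdom
  exact ⟨g, ⟨hg, Set.eq_univ_iff_forall.1 hcod⟩, partialGraph_subset_graph.1 hfS⟩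

end Homogeneity

theorem bi_equivalent_of_mb_homogeneous (L : FirstOrder.Language.{u, v}) [L.IsRelational]
    (M N : Type w) [L.Structure M] [L.Structure N] [Countable M] [Countable N]
    (hM : IsMBHomogeneous L M) (hN : IsMBHomogeneous L N)
    (hage : ∀ (B : Type w) [L.Structure B], Finite B →
      (Nonempty (B ↪[L] M) ↔ Nonempty (B ↪[L] N))) :
    BiExtendable L M N ∧ BiExtendable L N M := by
  have hMN : AgeSubset L M N := fun A hA => (hage A hA).1 ⟨A.subtype⟩
  have hNM : AgeSubset L N M := fun A hA => (hage A hA).2 ⟨A.subtype⟩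
  exact ⟨fun _ hA f => bi_equivalent_of_mb_homogeneous_general hM hN.isMMHomogeneous hMN hNM hA
      f.toHom f.injective,
    fun _ hA f => bi_equivalent_of_mb_homogeneous_general hN hM.isMMHomogeneous hNM hMN hA
      f.toHom f.injective⟩
end

section
/- Let G be a simple graph on a countably infinite vertex set V satisfying Alice's restaurant property (ARP). Then G is HE-homogeneous: for all finite subsets A, B of V and every function f : A → B that is a graph homomorphism between the subgraphs induced on A and B, there exists a surjective graph homomorphism g : V → V of G (g is surjective and maps adjacent vertices to adjacent vertices) whose restriction to A equals f. -/
/-! The theorem is a back-and-forth argument on finite partial homomorphisms. To define such a map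
at a new vertex `v`, send `v` to a common neighbour of the image: no edge can be lost. To hit a
vertex `w`, send to `w` a new vertex that has no neighbour in the domain: there is no edge to
preserve. Countability lets a single increasing chain of such maps meet all these requirements. -/

/-- The property that every finite set of vertices has a common neighbour; it provides images for
new vertices. For the complement `Gᶜ` it says that outside every finite set there is a vertex
`G`-adjacent to none of its members, which provides preimages. -/
def FinsetsHaveCommonNeighbor {V : Type*} (G : SimpleGraph V) : Prop :=
  ∀ U : Finset V, ∃ x, ∀ u ∈ U, G.Adj x u

/-- A homomorphism to `H` from a finite induced subgraph of `G`, encoded by its graph as a finite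
set of pairs, so that extension of maps is inclusion of sets. -/
def FinitePartialHom {V W : Type*} (G : SimpleGraph V) (H : SimpleGraph W) : Type _ :=
  { s : Finset (V × W) //
    ∀ p ∈ s, ∀ q ∈ s, (p.1 = q.1 → p.2 = q.2) ∧ (G.Adj p.1 q.1 → H.Adj p.2 q.2) }

namespace FinitePartialHom

variable {V W : Type*} {G : SimpleGraph V} {H : SimpleGraph W}

instance : Preorder (FinitePartialHom G H) := Subtype.preorder _

/-- The finite partial homomorphism given by a homomorphism on a finite induced subgraph. -/
noncomputable def ofHom {A : Set V} [Finite A] (f : G.induce A →g H) : FinitePartialHom G H :=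
  ⟨(Set.finite_range fun a : A ↦ ((a : V), f a)).toFinset, by
    simp only [Set.Finite.mem_toFinset, Set.forall_mem_range]
    exact fun a b ↦ ⟨fun hab ↦ congrArg f (Subtype.ext hab), fun hab ↦ f.map_adj hab⟩⟩

theorem mem_ofHom {A : Set V} [Finite A] (f : G.induce A →g H) (a : A) :
    ((a : V), f a) ∈ (ofHom f).1 :=
  (Set.Finite.mem_toFinset _).mpr ⟨a, rfl⟩

theorem exists_ge_mem (s : FinitePartialHom G H) {v : V} {w : W} (hv : ∀ p ∈ s.1, v ≠ p.1)
    (hw : ∀ p ∈ s.1, G.Adj v p.1 → H.Adj w p.2) : ∃ t, s ≤ t ∧ (v, w) ∈ t.1 := by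
  classical
  refine ⟨⟨insert (v, w) s.1, ?_⟩, Finset.subset_insert _ _, Finset.mem_insert_self _ _⟩
  intro p hp q hq
  rcases Finset.mem_insert.mp hp with rfl | hp <;> rcases Finset.mem_insert.mp hq with rfl | hq
  · exact ⟨fun _ ↦ rfl, fun h ↦ (G.irrefl h).elim⟩
  · exact ⟨fun h ↦ (hv q hq h).elim, hw q hq⟩
  · exact ⟨fun h ↦ (hv p hp h.symm).elim, fun h ↦ (hw p hp h.symm).symm⟩
  · exact s.2 p hp q hq

theorem isCofinal_defined (hH : FinsetsHaveCommonNeighbor H) (v : V) :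
    IsCofinal {s : FinitePartialHom G H | ∃ w, (v, w) ∈ s.1} := by
  classical
  intro s
  by_cases hv : ∃ w, (v, w) ∈ s.1
  · exact ⟨s, hv, le_rfl⟩
  obtain ⟨w, hw⟩ := hH (s.1.image Prod.snd)
  obtain ⟨t, hst, hvw⟩ := s.exists_ge_mem (v := v) (w := w)
    (fun p hp h ↦ hv ⟨p.2, h ▸ hp⟩) (fun p hp _ ↦ hw _ (Finset.mem_image_of_mem _ hp))
  exact ⟨t, ⟨w, hvw⟩, hst⟩

theorem isCofinal_attained (hG : FinsetsHaveCommonNeighbor Gᶜ) (w : W) :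
    IsCofinal {s : FinitePartialHom G H | ∃ v, (v, w) ∈ s.1} := by
  classical
  intro s
  obtain ⟨v, hv⟩ := hG (s.1.image Prod.fst)
  have hv' (p) (hp : p ∈ s.1) : v ≠ p.1 ∧ ¬ G.Adj v p.1 :=
    (G.compl_adj _ _).mp (hv _ (Finset.mem_image_of_mem _ hp))
  obtain ⟨t, hst, hvw⟩ := s.exists_ge_mem (w := w)
    (fun p hp ↦ (hv' p hp).1) (fun p hp h ↦ ((hv' p hp).2 h).elim)
  exact ⟨t, ⟨v, hvw⟩, hst⟩

theorem exists_hom_of_directedOn {S : Set (FinitePartialHom G H)} (hS : DirectedOn (· ≤ ·) S)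
    (hdef : ∀ v, ∃ s ∈ S, ∃ w, (v, w) ∈ s.1) :
    ∃ g : G →g H, ∀ s ∈ S, ∀ p ∈ s.1, g p.1 = p.2 := by
  have hcompat {s t} (hs : s ∈ S) (ht : t ∈ S) {p q} (hp : p ∈ s.1) (hq : q ∈ t.1) :
      (p.1 = q.1 → p.2 = q.2) ∧ (G.Adj p.1 q.1 → H.Adj p.2 q.2) := by
    obtain ⟨u, -, hsu, htu⟩ := hS s hs t ht
    exact u.2 p (hsu hp) q (htu hq)
  choose s hs g hg using hdef
  exact ⟨⟨g, fun {v w} ↦ (hcompat (hs v) (hs w) (hg v) (hg w)).2⟩,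
    fun t ht p hp ↦ (hcompat (hs p.1) ht (hg p.1) hp).1 rfl⟩

end FinitePartialHom

open FinitePartialHom in
theorem he_homogeneous_of_arp_general {V W : Type*} [Countable V] [Countable W]
    {G : SimpleGraph V} {H : SimpleGraph W} (hG : FinsetsHaveCommonNeighbor Gᶜ)
    (hH : FinsetsHaveCommonNeighbor H) {A : Set V} [Finite A] (f : G.induce A →g H) :
    ∃ g : G →g H, Function.Surjective g ∧ ∀ a : A, g a = f a := by
  have := Encodable.ofCountable (V ⊕ W)
  let requirement : V ⊕ W → Order.Cofinal (FinitePartialHom G H) := Sum.elim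
    (fun v ↦ ⟨_, isCofinal_defined hH v⟩) (fun w ↦ ⟨_, isCofinal_attained hG w⟩)
  let I := Order.idealOfCofinals (ofHom f) requirement
  have hmeets (i : V ⊕ W) : ∃ s ∈ requirement i, s ∈ I :=
    Order.cofinal_meets_idealOfCofinals _ _ i
  obtain ⟨g, hg⟩ := exists_hom_of_directedOn I.directed fun v ↦
    (hmeets (.inl v)).imp fun _ ↦ And.symm
  refine ⟨g, fun w ↦ ?_, fun a ↦ ?_⟩
  · obtain ⟨s, ⟨v, hvw⟩, hs⟩ := hmeets (.inr w)
    exact ⟨v, hg s hs _ hvw⟩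
  · exact hg _ (Order.mem_idealOfCofinals _ _) _ (mem_ofHom f a)

/-- A countably infinite graph with Alice's restaurant property is HE-homogeneous: every
graph homomorphism between finite induced subgraphs extends to a surjective graph
endomorphism. -/
theorem he_homogeneous_of_arp {V : Type*} [Countable V] [Infinite V] (G : SimpleGraph V)
    (hARP : ∀ U W : Set V, U.Finite → W.Finite → Disjoint U W →
      ∃ x : V, x ∉ U ∪ W ∧ (∀ u ∈ U, G.Adj x u) ∧ (∀ w ∈ W, ¬ G.Adj x w))
    (A B : Set V) (hA : A.Finite) (hB : B.Finite) (f : A → B)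
    (hf : ∀ a b : A, G.Adj (a : V) (b : V) → G.Adj (f a : V) (f b : V)) :
    ∃ g : V → V, Function.Surjective g ∧ (∀ v w : V, G.Adj v w → G.Adj (g v) (g w)) ∧
      ∀ a : A, g (a : V) = (f a : V) := by
  have hG : FinsetsHaveCommonNeighbor G := fun U ↦
    let ⟨x, _, hx, _⟩ := hARP U ∅ U.finite_toSet Set.finite_empty (Set.disjoint_empty _)
    ⟨x, hx⟩
  have hGc : FinsetsHaveCommonNeighbor Gᶜ := fun U ↦
    let ⟨x, hxU, _, hx⟩ := hARP ∅ U Set.finite_empty U.finite_toSet (Set.empty_disjoint _)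
    ⟨x, fun u hu ↦ (G.compl_adj x u).mpr ⟨fun h ↦ hxU (.inr (h ▸ hu)), hx u hu⟩⟩
  have : Finite A := hA
  obtain ⟨g, hsurj, hext⟩ := he_homogeneous_of_arp_general hGc hG
    (A := A) ⟨fun a ↦ (f a : V), fun {a b} ↦ hf a b⟩
  exact ⟨g, hsurj, fun _ _ ↦ g.map_adj, hext⟩
end

section
/- Let n ≥ 3 and let G be a simple graph on a countably infinite vertex set V that contains an independent set of size n − 1 but no independent set of size n. Then G is not HE-homogeneous: there exist finite subsets A, B of V and a graph homomorphism f : A → B between the induced subgraphs such that no surjective graph homomorphism g : V → V of G restricts to f on A. -/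
/-! Preimages of independent sets under a graph homomorphism are independent. Hence a surjective
endomorphism is injective over every independent set `S` of maximum size: otherwise the preimage
of `S` would be an independent set larger than `S`. So a map collapsing two points of `S` to a
point of `S`, although a homomorphism for lack of edges, has no surjective extension. -/

section IndepSet

variable {V W : Type*} {G : SimpleGraph V} {H : SimpleGraph W}

theorem isIndepSet_preimage (f : G →g H) {s : Set W} (hs : H.IsIndepSet s) :
    G.IsIndepSet (f ⁻¹' s) := fun _ ha _ hb _ hab =>
  hs ha hb (f.map_adj hab).ne (f.map_adj hab)

theorem encard_lt_of_indepSetFree {n : ℕ} (hG : G.IndepSetFree n) {s : Set V}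
    (hs : G.IsIndepSet s) : s.encard < n := by
  by_contra! hn
  obtain ⟨t, hts, ht⟩ := Set.exists_subset_encard_eq hn
  lift t to Finset V using Set.finite_of_encard_eq_coe ht
  exact hG t ⟨hs.mono hts, by simpa only [Set.encard_coe_eq_coe_finsetCard, Nat.cast_inj] using ht⟩

theorem injOn_preimage_of_indepSetFree (f : G →g H) {s : Finset W} (hs : H.IsIndepSet s)
    (hsf : (s : Set W) ⊆ Set.range f) (hG : G.IndepSetFree (s.card + 1)) :
    Set.InjOn f (f ⁻¹' s) := by
  have hlt : (f ⁻¹' (s : Set W)).encard < (s.card + 1 : ℕ) :=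
    encard_lt_of_indepSetFree hG (isIndepSet_preimage f hs)
  have himage : f '' (f ⁻¹' (s : Set W)) = s := Set.image_preimage_eq_of_subset hsf
  refine (Set.finite_of_encard_le_coe hlt.le).injOn_of_encard_image_eq
    (le_antisymm (Set.encard_image_le f _) ?_)
  rw [himage, Set.encard_coe_eq_coe_finsetCard]
  exact Order.le_of_lt_add_one (by exact_mod_cast hlt)

end IndepSet

theorem not_he_homogeneous_of_no_large_independent_set_general {V : Type*}
    (G : SimpleGraph V) (n : ℕ) (hn : 3 ≤ n)
    (hsmall : ∃ S : Finset V, S.card = n - 1 ∧ ∀ a ∈ S, ∀ b ∈ S, ¬ G.Adj a b)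
    (hbig : ¬ ∃ S : Finset V, S.card = n ∧ ∀ a ∈ S, ∀ b ∈ S, ¬ G.Adj a b) :
    ∃ (A B : Set V) (_ : A.Finite) (_ : B.Finite) (f : A → B),
      (∀ a b : A, G.Adj (a : V) (b : V) → G.Adj (f a : V) (f b : V)) ∧
      ∀ g : V → V, Function.Surjective g → (∀ v w : V, G.Adj v w → G.Adj (g v) (g w)) →
        ¬ ∀ a : A, g (a : V) = (f a : V) := by
  obtain ⟨S, hcard, hS⟩ := hsmall
  obtain ⟨a, ha, b, hb, hab⟩ : ∃ a ∈ S, ∃ b ∈ S, a ≠ b := Finset.one_lt_card.mp (by omega)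
  have hfree : G.IndepSetFree (S.card + 1) := fun T hT =>
    hbig ⟨T, hT.card_eq.trans (by omega),
      fun u hu v hv huv => hT.isIndepSet hu hv huv.ne huv⟩
  have hpair : ({a, b} : Set V) ⊆ S := Set.pair_subset ha hb
  refine ⟨{a, b}, {a}, Set.toFinite _, Set.toFinite _, fun _ => ⟨a, rfl⟩,
    fun u v huv => absurd huv (hS u (hpair u.2) v (hpair v.2)), fun g hsurj hom hext => hab ?_⟩
  have hga : g a = a := hext ⟨a, Set.mem_insert a {b}⟩
  have hgb : g b = a := hext ⟨b, Set.mem_insert_of_mem a rfl⟩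
  have hinj : Set.InjOn g (g ⁻¹' S) :=
    injOn_preimage_of_indepSetFree (⟨g, hom _ _⟩ : G →g G) (fun u hu v hv _ => hS u hu v hv)
      (fun x _ => hsurj x) hfree
  exact hinj (by rwa [Set.mem_preimage, hga]) (by rwa [Set.mem_preimage, hgb]) (hga.trans hgb.symm)

/-- A countably infinite graph containing an independent set of size `n - 1` but no
independent set of size `n` (for `n ≥ 3`) is not HE-homogeneous: some graph homomorphism
between finite induced subgraphs extends to no surjective graph endomorphism. -/
theorem not_he_homogeneous_of_no_large_independent_set {V : Type*} [Countable V] [Infinite V]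
    (G : SimpleGraph V) (n : ℕ) (hn : 3 ≤ n)
    (hsmall : ∃ S : Finset V, S.card = n - 1 ∧ ∀ a ∈ S, ∀ b ∈ S, ¬ G.Adj a b)
    (hbig : ¬ ∃ S : Finset V, S.card = n ∧ ∀ a ∈ S, ∀ b ∈ S, ¬ G.Adj a b) :
    ∃ (A B : Set V) (_ : A.Finite) (_ : B.Finite) (f : A → B),
      (∀ a b : A, G.Adj (a : V) (b : V) → G.Adj (f a : V) (f b : V)) ∧
      ∀ g : V → V, Function.Surjective g → (∀ v w : V, G.Adj v w → G.Adj (g v) (g w)) →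
        ¬ ∀ a : A, g (a : V) = (f a : V) :=
  not_he_homogeneous_of_no_large_independent_set_general G n hn hsmall hbig
end

section
/- Let V be a type and let D : V → V → Prop be a digraph that is irreflexive (no loops) and has no 2-cycles (never both D v w and D w v), and suppose that for all distinct vertices v, w with neither D v w nor D w v there exists a vertex x with D x v and D w x. Then every endomorphism of the digraph is injective: every function γ : V → V satisfying D v w → D (γ v) (γ w) for all v, w is injective. -/
/-!
A homomorphism that identifies `v` and `w` turns an arc between them into a loop, and a directed
path `w → x → v` into a 2-cycle. If any two distinct vertices are joined in one of these ways,
then a homomorphism into a digraph with neither loops nor 2-cycles cannot identify them.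
-/

section Homomorphism

variable {V W : Type*} {D : V → V → Prop} {E : W → W → Prop}

theorem not_rel_of_map_eq [Std.Irrefl E] (f : D →r E) {v w : V} (hvw : f v = f w) :
    ¬ D v w := fun hD =>
  ne_of_irrefl (f.map_rel hD) hvw

theorem not_rel_of_rel_of_map_eq [Std.Asymm E] (f : D →r E) {v w x : V} (hvw : f v = f w)
    (hwx : D w x) : ¬ D x v := by
  intro hxv
  have hxw : E (f x) (f w) := hvw ▸ f.map_rel hxv
  exact asymm_of E (f.map_rel hwx) hxw

theorem digraph_endomorphism_injective_general [Std.Asymm E]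
    (hind : ∀ v w : V, v ≠ w → ¬ D v w → ¬ D w v → ∃ x : V, D x v ∧ D w x) (f : D →r E) :
    Function.Injective f := by
  intro v w hvw
  by_contra hne
  obtain ⟨x, hxv, hwx⟩ :=
    hind v w hne (not_rel_of_map_eq f hvw) (not_rel_of_map_eq f hvw.symm)
  exact not_rel_of_rel_of_map_eq f hvw hwx hxv

end Homomorphism

/-- In a loopless digraph without 2-cycles in which every pair of distinct independent
vertices `v, w` admits a vertex `x` with `D x v` and `D w x`, every endomorphism of the
digraph is injective. -/
theorem digraph_endomorphism_injective {V : Type*} (D : V → V → Prop)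
    (hirr : ∀ v : V, ¬ D v v)
    (hno2 : ∀ v w : V, ¬ (D v w ∧ D w v))
    (hind : ∀ v w : V, v ≠ w → ¬ D v w → ¬ D w v → ∃ x : V, D x v ∧ D w x)
    (γ : V → V) (hγ : ∀ v w : V, D v w → D (γ v) (γ w)) :
    Function.Injective γ :=
  have : Std.Asymm D := ⟨fun v w hvw hwv => hno2 v w ⟨hvw, hwv⟩⟩
  digraph_endomorphism_injective_general hind (⟨γ, hγ _ _⟩ : D →r D)
end
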